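/- arXiv:0909.1599 — 3 statements merged into one kernel-verified Lean document; each statement's English description precedes it below -/
import Mathlib

section
/- Let $N \ge 2$ and $M = N+1$. A family $\Psi = \{\psi_k\}_{k=1}^M$ of vectors in $\mathbb{R}^N$ is called a restricted equiangular tight frame if $\|\psi_k\| = 1$ for all $k$, $F^{*}F = \frac{M}{N} I_N$ where $F$ is the $M\times N$ matrix with rows $\psi_k^{T}$, and there is a constant $c \in \mathbb{R}$ with $\langle \psi_\ell, \psi_k\rangle = c$ for all $1 \le \ell < k \le M$. Let $\{\phi_k\}_{k=1}^M$ be the real harmonic tight frame of $M$ vectors in $\mathbb{R}^N$, that is, for $k = 0,\dots,M-1$, $$\phi_{k+1}^{T} = \sqrt{\tfrac{2}{N}}\left[\cos\tfrac{k\pi}{M}, \cos\tfrac{3k\pi}{M},\dots,\cos\tfrac{(N-1)k\pi}{M}, \sin\tfrac{k\pi}{M}, \sin\tfrac{3k\pi}{M},\dots,\sin\tfrac{(N-1)k\pi}{M}\right]$$ if $N$ is even, and $$\phi_{k+1}^{T} = \sqrt{\tfrac{2}{N}}\left[\tfrac{1}{\sqrt2}, \cos\tfrac{2k\pi}{M},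 \cos\tfrac{4k\pi}{M},\dots,\cos\tfrac{(N-1)k\pi}{M}, \sin\tfrac{2k\pi}{M}, \sin\tfrac{4k\pi}{M},\dots,\sin\tfrac{(N-1)k\pi}{M}\right]$$ if $N$ is odd. Then $\Psi$ is a restricted equiangular tight frame if and only if there exist an orthogonal $N\times N$ matrix $U$, a permutation $\sigma$ of $\{1,\dots,M\}$ and a sign $\gamma \in \{-1,+1\}$ such that $$\psi_k = U\left(\gamma(-1)^{\sigma(k)}\phi_{\sigma(k)}\right) \quad\text{for all } k = 1,\dots,M;$$ that is, the family of all restricted equiangular tight frames with $M = N+1$ consists exactly of the frames obtained from the modulated harmonic tight frames $\{\gamma(-1)^k\phi_k\}_{k=1}^M$ by orthogonal maps (Type I equivalence) and permutations of the indices (Type II equivalence). The "if" direction also holds for $N = 1$, $M = 2$. -/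
/-- The analysis frame operator: the `M × N` matrix whose `k`-th row is `φ_k`. -/
def analysisMatrix {M N : ℕ} (Φ : Fin M → EuclideanSpace ℝ (Fin N)) :
    Matrix (Fin M) (Fin N) ℝ :=
  Matrix.of fun k i => Φ k i

/-- Unit-norm tight frames: all vectors have norm one and `F* F = (M / N) I_N`. -/
def IsUNTF {M N : ℕ} (Φ : Fin M → EuclideanSpace ℝ (Fin N)) : Prop :=
  (∀ k, ‖Φ k‖ = 1) ∧
    (analysisMatrix Φ).transpose * analysisMatrix Φ =
      ((M : ℝ) / (N : ℝ)) • (1 : Matrix (Fin N) (Fin N) ℝ)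

/-- Restricted equiangular tight frames: unit-norm tight frames in which all inner products of
two vectors with different indices are equal (signs included). -/
def IsRestrictedETF {M N : ℕ} (Φ : Fin M → EuclideanSpace ℝ (Fin N)) : Prop :=
  IsUNTF Φ ∧ ∃ c : ℝ, ∀ l k : Fin M, l < k → inner ℝ (Φ l) (Φ k) = c

/-- The real harmonic tight frame of `M` vectors in `ℝ^N`. Indices start at `0`: `htf N M k` is
the vector `φ_{k+1}`, for `k = 0, …, M - 1`. For even `N` the frequencies of the `N / 2` cosines
and of the `N / 2` sines are `1, 3, …, N - 1`; for odd `N` there is one constant entry, and the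
frequencies of the `(N - 1) / 2` cosines and of the `(N - 1) / 2` sines are `2, 4, …, N - 1`. -/
noncomputable def htf (N M : ℕ) (k : Fin M) : EuclideanSpace ℝ (Fin N) :=
  WithLp.toLp 2 fun i : Fin N =>
    Real.sqrt (2 / (N : ℝ)) *
      (if Even N then
        if (i : ℕ) < N / 2 then
          Real.cos (((2 * (i : ℕ) + 1 : ℕ) : ℝ) * ((k : ℕ) : ℝ) * Real.pi / (M : ℝ))
        else
          Real.sin (((2 * ((i : ℕ) - N / 2) + 1 : ℕ) : ℝ) * ((k : ℕ) : ℝ) * Real.pi / (M : ℝ))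
      else
        if (i : ℕ) = 0 then 1 / Real.sqrt 2
        else if (i : ℕ) ≤ (N - 1) / 2 then
          Real.cos (((2 * (i : ℕ) : ℕ) : ℝ) * ((k : ℕ) : ℝ) * Real.pi / (M : ℝ))
        else
          Real.sin (((2 * ((i : ℕ) - (N - 1) / 2) : ℕ) : ℝ) * ((k : ℕ) : ℝ) * Real.pi / (M : ℝ)))

/-- The modulated harmonic tight frame `γ (-1)^k φ_k`, `k = 1, …, M`; the index `k : Fin M` stands
for `k + 1`. -/
noncomputable def modulatedHTF (N M : ℕ) (γ : ℝ) (k : Fin M) : EuclideanSpace ℝ (Fin N) :=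
  (γ * (-1 : ℝ) ^ ((k : ℕ) + 1)) • htf N M k

/-- `Ψ` arises from a modulated harmonic tight frame by a permutation of the indices (Type II
equivalence) and an orthogonal matrix (Type I equivalence). Either may be trivial. -/
def IsEquivModulatedHTF {M N : ℕ} (Ψ : Fin M → EuclideanSpace ℝ (Fin N)) : Prop :=
  ∃ U ∈ Matrix.orthogonalGroup (Fin N) ℝ, ∃ σ : Equiv.Perm (Fin M), ∃ γ : ℝ,
    (γ = 1 ∨ γ = -1) ∧ ∀ k, Ψ k = Matrix.toEuclideanLin U (modulatedHTF N M γ (σ k))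

open Matrix in
/-- The Gram matrix of a family of vectors is `F Fᵀ`. -/
theorem analysisMatrix_mul_transpose_apply {M N : ℕ} (Φ : Fin M → EuclideanSpace ℝ (Fin N))
    (k l : Fin M) : (analysisMatrix Φ * (analysisMatrix Φ)ᵀ) k l = inner ℝ (Φ k) (Φ l) := by
  simp [analysisMatrix, Matrix.mul_apply, PiLp.inner_apply, mul_comm]

/-- The Gram matrix of the vertices of a regular simplex of dimension `N` centred at the origin. -/
noncomputable def simplexGram (M N : ℕ) : Matrix (Fin M) (Fin M) ℝ :=
  Matrix.of fun k l => if k = l then 1 else -(1 / (N : ℝ))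

/-- A symmetric real matrix whose square has trace zero vanishes. -/
theorem Matrix.IsSymm.eq_zero_of_trace_mul_self {n : ℕ} {A : Matrix (Fin n) (Fin n) ℝ}
    (hA : A.IsSymm) (h : (A * A).trace = 0) : A = 0 := by
  have h' : (A.conjTranspose * A).trace = 0 := by
    rw [Matrix.conjTranspose_eq_transpose_of_trivial, hA.eq, h]
  exact Matrix.trace_conjTranspose_mul_self_eq_zero_iff.mp h'

theorem trace_simplexGram (M N : ℕ) : (simplexGram M N).trace = M := by
  simp [simplexGram, Matrix.trace]

/-- Row sums over `Fin M` of a function that is constant off one index. -/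
theorem sum_ite_eq_const {M : ℕ} (k : Fin M) (a b : ℝ) :
    ∑ l : Fin M, (if k = l then a else b) = a + ((M : ℝ) - 1) * b := by
  have h : ∀ l : Fin M, (if k = l then a else b) = b + if k = l then a - b else 0 := by
    intro l; split_ifs <;> ring
  simp_rw [h, Finset.sum_add_distrib]
  simp
  ring

theorem trace_simplexGram_mul_self (N : ℕ) (hN : 1 ≤ N) :
    (simplexGram (N + 1) N * simplexGram (N + 1) N).trace = ((N + 1 : ℕ) : ℝ) ^ 2 / N := by
  have hN0 : (N : ℝ) ≠ 0 := by positivity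
  have h : ∀ k : Fin (N + 1), (simplexGram (N + 1) N * simplexGram (N + 1) N) k k
      = 1 + N * (1 / (N : ℝ)) ^ 2 := by
    intro k
    have h' : ∀ l, simplexGram (N + 1) N k l * simplexGram (N + 1) N l k
        = if k = l then 1 else (1 / (N : ℝ)) ^ 2 := by
      intro l
      simp only [simplexGram, Matrix.of_apply, eq_comm (a := l)]
      split_ifs <;> ring
    rw [Matrix.mul_apply, Finset.sum_congr rfl fun l _ => h' l, sum_ite_eq_const]
    push_cast; ring
  simp only [Matrix.trace, Matrix.diag_apply, h]
  simp
  field_simp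

open Matrix in
/-- A matrix `F` with `F Fᵀ` the simplex Gram matrix satisfies `Fᵀ F = (M / N) I`. -/
theorem transpose_mul_self_of_simplexGram {N : ℕ} (hN : 1 ≤ N)
    {F : Matrix (Fin (N + 1)) (Fin N) ℝ} (h : F * Fᵀ = simplexGram (N + 1) N) :
    Fᵀ * F = (((N + 1 : ℕ) : ℝ) / (N : ℝ)) • (1 : Matrix (Fin N) (Fin N) ℝ) := by
  have hN0 : (N : ℝ) ≠ 0 := by positivity
  rw [← sub_eq_zero]
  apply Matrix.IsSymm.eq_zero_of_trace_mul_self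
  · simp [Matrix.IsSymm, Matrix.transpose_sub, Matrix.transpose_mul]
  · have h1 : (Fᵀ * F).trace = ((N + 1 : ℕ) : ℝ) := by
      rw [Matrix.trace_mul_comm, h, trace_simplexGram]
    have h2 : (Fᵀ * F * (Fᵀ * F)).trace = ((N + 1 : ℕ) : ℝ) ^ 2 / N := by
      rw [← trace_simplexGram_mul_self N hN, ← h, Matrix.mul_assoc, Matrix.trace_mul_comm]
      simp only [Matrix.mul_assoc]
    simp only [Matrix.sub_mul, Matrix.mul_sub, Matrix.smul_mul, Matrix.mul_smul, Matrix.mul_one,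
      Matrix.one_mul, Matrix.trace_sub, Matrix.trace_smul, h1, h2, Matrix.trace_one,
      Fintype.card_fin, smul_eq_mul]
    field_simp
    ring

open Matrix in
theorem isRestrictedETF_of_gram {N : ℕ} (hN : 1 ≤ N)
    {Φ : Fin (N + 1) → EuclideanSpace ℝ (Fin N)}
    (h : analysisMatrix Φ * (analysisMatrix Φ)ᵀ = simplexGram (N + 1) N) : IsRestrictedETF Φ := by
  have hG : ∀ k l, inner ℝ (Φ k) (Φ l) = simplexGram (N + 1) N k l := fun k l => by
    rw [← h, analysisMatrix_mul_transpose_apply]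
  refine ⟨⟨fun k => ?_, transpose_mul_self_of_simplexGram hN h⟩, -(1 / (N : ℝ)), fun l k hlk => ?_⟩
  · have hk := hG k k
    rw [real_inner_self_eq_norm_sq] at hk
    simp only [simplexGram, Matrix.of_apply, if_true] at hk
    exact (pow_eq_one_iff_of_nonneg (norm_nonneg _) two_ne_zero).mp hk
  · simp [hG, simplexGram, hlk.ne]

open Matrix in
theorem gram_of_isRestrictedETF {N : ℕ} (hN : 2 ≤ N)
    {Φ : Fin (N + 1) → EuclideanSpace ℝ (Fin N)} (h : IsRestrictedETF Φ) :
    analysisMatrix Φ * (analysisMatrix Φ)ᵀ = simplexGram (N + 1) N := by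
  obtain ⟨⟨hnorm, htight⟩, c, hc⟩ := h
  have hN0 : (N : ℝ) ≠ 0 := by positivity
  have hN2 : (2 : ℝ) ≤ N := by exact_mod_cast hN
  set F := analysisMatrix Φ with hF
  have hG : ∀ k l, (F * Fᵀ) k l = if k = l then 1 else c := by
    intro k l
    rw [hF, analysisMatrix_mul_transpose_apply]
    split_ifs with hkl
    · rw [hkl, real_inner_self_eq_norm_sq, hnorm, one_pow]
    · rcases lt_or_gt_of_ne hkl with hlt | hlt
      · exact hc k l hlt
      · rw [real_inner_comm]; exact hc l k hlt
  have hsq : F * Fᵀ * (F * Fᵀ) = (((N + 1 : ℕ) : ℝ) / (N : ℝ)) • (F * Fᵀ) := by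
    rw [Matrix.mul_assoc, ← Matrix.mul_assoc Fᵀ, htight]
    simp
  have hdiag : 1 + N * c ^ 2 = (N + 1) / N := by
    have h0 := congrFun (congrFun hsq 0) 0
    simp only [Matrix.mul_apply (M := F * Fᵀ), Matrix.smul_apply, hG] at h0
    have h' : ∀ l : Fin (N + 1), ((if 0 = l then 1 else c) * if l = 0 then 1 else c : ℝ)
        = if 0 = l then 1 else c ^ 2 := by
      intro l
      simp only [eq_comm (a := l)]
      split_ifs <;> ring
    rw [Finset.sum_congr rfl fun l _ => h' l, sum_ite_eq_const] at h0
    push_cast at h0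
    simpa using h0
  have hoff : 2 * c + (N - 1) * c ^ 2 = (N + 1) / N * c := by
    have hne : (0 : Fin (N + 1)) ≠ Fin.last N := by
      simp [Fin.ext_iff]; omega
    have h0 := congrFun (congrFun hsq 0) (Fin.last N)
    simp only [Matrix.mul_apply (M := F * Fᵀ), Matrix.smul_apply, hG, if_neg hne] at h0
    have h' : ∀ l : Fin (N + 1), ((if 0 = l then 1 else c) * if l = Fin.last N then 1 else c : ℝ)
        = (if 0 = l then c - c ^ 2 else 0) + if Fin.last N = l then c else c ^ 2 := by
      intro l
      by_cases h1 : 0 = l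
      · subst h1; simp [hne, hne.symm]
      · by_cases h2 : l = Fin.last N
        · subst h2; simp [hne]
        · simp [h1, h2, Ne.symm h2]; ring
    rw [Finset.sum_congr rfl fun l _ => h' l, Finset.sum_add_distrib, sum_ite_eq_const,
      sum_ite_eq_const] at h0
    push_cast at h0
    rw [smul_eq_mul] at h0
    linarith
  have hc0 : c ≠ 0 := by
    rintro rfl
    field_simp at hdiag
    linarith
  have hcval : c = -(1 / (N : ℝ)) := by
    have h1 : 2 + (N - 1) * c = (N + 1) / N := mul_right_cancel₀ hc0 (by linarith)
    field_simp at h1 ⊢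
    have h2 : ((N : ℝ) - 1) * (N * c + 1) = 0 := by linarith
    rcases mul_eq_zero.mp h2 with h3 | h3 <;> linarith
  ext k l
  simp [hG, simplexGram, hcval]

open Matrix in
/-- Two tight frames with the same Gram matrix differ by an orthogonal matrix. -/
theorem exists_orthogonal_of_gram_eq {M N : ℕ} (hM : M ≠ 0) (hN : N ≠ 0)
    {Φ Ψ : Fin M → EuclideanSpace ℝ (Fin N)} (hΦ : IsUNTF Φ) (hΨ : IsUNTF Ψ)
    (h : analysisMatrix Φ * (analysisMatrix Φ)ᵀ = analysisMatrix Ψ * (analysisMatrix Ψ)ᵀ) :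
    ∃ U ∈ Matrix.orthogonalGroup (Fin N) ℝ, ∀ k, Ψ k = Matrix.toEuclideanLin U (Φ k) := by
  have hM0 : (M : ℝ) ≠ 0 := by exact_mod_cast hM
  have hN0 : (N : ℝ) ≠ 0 := by exact_mod_cast hN
  have hΦt := hΦ.2
  have hΨt := hΨ.2
  set A := analysisMatrix Φ with hA
  set B := analysisMatrix Ψ with hB
  refine ⟨((N : ℝ) / M) • (Bᵀ * A), ?_, fun k => ?_⟩
  · rw [Matrix.mem_orthogonalGroup_iff']
    have h1 : (Aᵀ * B) * (Bᵀ * A) = ((M : ℝ) / N) • ((M : ℝ) / N) • 1 := by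
      rw [Matrix.mul_assoc, ← Matrix.mul_assoc B, ← h, Matrix.mul_assoc A, hΦt]
      simp [hΦt]
    rw [Matrix.transpose_smul, Matrix.transpose_mul, Matrix.transpose_transpose, Matrix.smul_mul,
      Matrix.mul_smul, h1, smul_smul, smul_smul, smul_smul]
    convert one_smul ℝ _ using 2
    field_simp
  · have h1 : (((N : ℝ) / M) • (Bᵀ * A)) * Aᵀ = Bᵀ := by
      rw [Matrix.smul_mul, Matrix.mul_assoc, h, ← Matrix.mul_assoc, hΨt, Matrix.smul_mul,
        smul_smul, Matrix.one_mul]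
      convert one_smul ℝ _ using 2
      field_simp
    ext i
    have h2 := congrFun (congrFun h1 i) k
    rw [Matrix.mul_apply] at h2
    simp only [hA, hB, analysisMatrix, Matrix.transpose_apply, Matrix.of_apply] at h2
    rw [← h2]
    simp [Matrix.toEuclideanLin, Matrix.toLpLin, Matrix.mulVec, dotProduct, hA, hB, analysisMatrix, Finset.mul_sum,
      mul_assoc]

theorem sin_mul_sum_cos_odd (θ : ℝ) (m : ℕ) :
    Real.sin θ * (2 * ∑ j ∈ Finset.range m, Real.cos ((2 * j + 1) * θ)) = Real.sin (2 * m * θ) := by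
  induction m with
  | zero => simp
  | succ m ih =>
    rw [Finset.sum_range_succ, mul_add, mul_add, ih]
    have h1 : 2 * ((m + 1 : ℕ) : ℝ) * θ = (2 * m + 1) * θ + θ := by push_cast; ring
    have h2 : 2 * (m : ℝ) * θ = (2 * m + 1) * θ - θ := by ring
    rw [h1, h2, Real.sin_add, Real.sin_sub]
    ring

theorem sin_mul_sum_cos_even (θ : ℝ) (m : ℕ) :
    Real.sin θ * (1 + 2 * ∑ j ∈ Finset.range m, Real.cos (2 * (j + 1) * θ)) =
      Real.sin ((2 * m + 1) * θ) := by
  induction m with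
  | zero => simp
  | succ m ih =>
    rw [Finset.sum_range_succ, mul_add 2, ← add_assoc, mul_add, ih]
    have h1 : (2 * ((m + 1 : ℕ) : ℝ) + 1) * θ = 2 * (m + 1) * θ + θ := by push_cast; ring
    have h2 : (2 * (m : ℝ) + 1) * θ = 2 * (m + 1) * θ - θ := by ring
    rw [h1, h2, Real.sin_add, Real.sin_sub]
    ring

/-- Inner products of the harmonic tight frame for even `N = 2 m`. -/
theorem inner_htf_even (m M : ℕ) (hm : m ≠ 0) (k l : Fin M) :
    inner ℝ (htf (m + m) M k) (htf (m + m) M l) =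
      1 / (m : ℝ) * ∑ j ∈ Finset.range m,
        Real.cos ((2 * j + 1) * (((k : ℕ) - (l : ℕ) : ℝ) * Real.pi / M)) := by
  have hm0 : (m : ℝ) ≠ 0 := by exact_mod_cast hm
  have hs : Real.sqrt (2 / ((m + m : ℕ) : ℝ)) * Real.sqrt (2 / ((m + m : ℕ) : ℝ)) = 1 / m := by
    rw [Real.mul_self_sqrt (by positivity)]
    push_cast
    field_simp
    ring
  have hhalf : (m + m) / 2 = m := by omega
  simp only [PiLp.inner_apply, htf, RCLike.inner_apply, conj_trivial, Even.add_self, if_true, hhalf]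
  rw [Fin.sum_univ_eq_sum_range (fun i : ℕ => Real.sqrt (2 / ((m + m : ℕ) : ℝ)) *
      (if i < m then Real.cos (((2 * i + 1 : ℕ) : ℝ) * ((l : ℕ) : ℝ) * Real.pi / (M : ℝ))
        else Real.sin (((2 * (i - m) + 1 : ℕ) : ℝ) * ((l : ℕ) : ℝ) * Real.pi / (M : ℝ))) *
      (Real.sqrt (2 / ((m + m : ℕ) : ℝ)) *
      (if i < m then Real.cos (((2 * i + 1 : ℕ) : ℝ) * ((k : ℕ) : ℝ) * Real.pi / (M : ℝ))
        else Real.sin (((2 * (i - m) + 1 : ℕ) : ℝ) * ((k : ℕ) : ℝ) * Real.pi / (M : ℝ))))) (m + m),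
    Finset.sum_range_add, ← Finset.sum_add_distrib, Finset.mul_sum]
  refine Finset.sum_congr rfl fun j hj => ?_
  have hj' : ¬ m + j < m := by omega
  rw [if_pos (Finset.mem_range.mp hj), if_pos (Finset.mem_range.mp hj), if_neg hj', if_neg hj',
    Nat.add_sub_cancel_left, ← hs]
  have : (2 * (j : ℝ) + 1) * (((k : ℕ) - (l : ℕ) : ℝ) * Real.pi / M) =
      ((2 * j + 1 : ℕ) : ℝ) * ((k : ℕ) : ℝ) * Real.pi / (M : ℝ) -
      ((2 * j + 1 : ℕ) : ℝ) * ((l : ℕ) : ℝ) * Real.pi / (M : ℝ) := by push_cast; ring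
  rw [this, Real.cos_sub]
  ring

/-- Inner products of the harmonic tight frame for odd `N = 2 m + 1`. -/
theorem inner_htf_odd (m M : ℕ) (k l : Fin M) :
    inner ℝ (htf (m + m + 1) M k) (htf (m + m + 1) M l) =
      1 / (2 * m + 1 : ℝ) * (1 + 2 * ∑ j ∈ Finset.range m,
        Real.cos (2 * (j + 1) * (((k : ℕ) - (l : ℕ) : ℝ) * Real.pi / M))) := by
  have hs : Real.sqrt (2 / ((m + m + 1 : ℕ) : ℝ)) * Real.sqrt (2 / ((m + m + 1 : ℕ) : ℝ))
      = 2 / (2 * m + 1) := by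
    rw [Real.mul_self_sqrt (by positivity)]
    push_cast
    ring
  have h2 : (1 / Real.sqrt 2) * (1 / Real.sqrt 2) = 1 / 2 := by
    rw [div_mul_div_comm, Real.mul_self_sqrt (by norm_num)]; norm_num
  have hodd : ¬ Even (m + m + 1) := by
    rw [Nat.not_even_iff_odd]; exact ⟨m, by ring⟩
  have hhalf : (m + m + 1 - 1) / 2 = m := by omega
  simp only [PiLp.inner_apply, htf, RCLike.inner_apply, conj_trivial, if_neg hodd, hhalf]
  rw [Fin.sum_univ_eq_sum_range (fun i : ℕ => Real.sqrt (2 / ((m + m + 1 : ℕ) : ℝ)) *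
      (if i = 0 then 1 / Real.sqrt 2 else
        if i ≤ m then Real.cos (((2 * i : ℕ) : ℝ) * ((l : ℕ) : ℝ) * Real.pi / (M : ℝ))
        else Real.sin (((2 * (i - m) : ℕ) : ℝ) * ((l : ℕ) : ℝ) * Real.pi / (M : ℝ))) *
      (Real.sqrt (2 / ((m + m + 1 : ℕ) : ℝ)) *
      (if i = 0 then 1 / Real.sqrt 2 else
        if i ≤ m then Real.cos (((2 * i : ℕ) : ℝ) * ((k : ℕ) : ℝ) * Real.pi / (M : ℝ))
        else Real.sin (((2 * (i - m) : ℕ) : ℝ) * ((k : ℕ) : ℝ) * Real.pi / (M : ℝ)))))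
      (m + m + 1),
    Finset.sum_range_succ', Finset.sum_range_add, ← Finset.sum_add_distrib, if_pos rfl, if_pos rfl,
    mul_mul_mul_comm, hs, h2, mul_add, add_comm, Finset.mul_sum, Finset.mul_sum]
  congr 1
  · ring
  refine Finset.sum_congr rfl fun j hj => ?_
  have hj1 : j + 1 ≤ m := Finset.mem_range.mp hj
  have hj2 : ¬ m + j + 1 ≤ m := by omega
  have hj3 : m + j + 1 - m = j + 1 := by omega
  rw [if_neg (Nat.succ_ne_zero _), if_neg (Nat.succ_ne_zero _), if_neg (Nat.succ_ne_zero _),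
    if_neg (Nat.succ_ne_zero _), if_pos hj1, if_pos hj1, if_neg hj2, if_neg hj2, hj3,
    mul_mul_mul_comm, hs, mul_mul_mul_comm, hs]
  have : 2 * ((j : ℝ) + 1) * (((k : ℕ) - (l : ℕ) : ℝ) * Real.pi / M) =
      ((2 * (j + 1) : ℕ) : ℝ) * ((k : ℕ) : ℝ) * Real.pi / (M : ℝ) -
      ((2 * (j + 1) : ℕ) : ℝ) * ((l : ℕ) : ℝ) * Real.pi / (M : ℝ) := by push_cast; ring
  rw [this, Real.cos_sub]
  ring

theorem inner_htf_self (N M : ℕ) (hN : 1 ≤ N) (k : Fin M) :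
    inner ℝ (htf N M k) (htf N M k) = (1 : ℝ) := by
  rcases Nat.even_or_odd' N with ⟨m, rfl | rfl⟩
  · have hm : m ≠ 0 := by omega
    have hm0 : (m : ℝ) ≠ 0 := by exact_mod_cast hm
    rw [two_mul, inner_htf_even m M hm]
    simp [hm0]
  · rw [two_mul, inner_htf_odd]
    have : (2 * m + 1 : ℝ) ≠ 0 := by positivity
    simp
    field_simp
    ring

/-- The inner products are values of the Dirichlet kernel. -/
theorem sin_mul_inner_htf (N M : ℕ) (hN : 1 ≤ N) (k l : Fin M) :
    Real.sin (((k : ℕ) - (l : ℕ) : ℝ) * Real.pi / M) *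
        ((N : ℝ) * inner ℝ (htf N M k) (htf N M l)) =
      Real.sin (N * (((k : ℕ) - (l : ℕ) : ℝ) * Real.pi / M)) := by
  rcases Nat.even_or_odd' N with ⟨m, rfl | rfl⟩
  · have hm : m ≠ 0 := by omega
    have hm0 : (m : ℝ) ≠ 0 := by exact_mod_cast hm
    have h := sin_mul_sum_cos_odd (((k : ℕ) - (l : ℕ) : ℝ) * Real.pi / M) m
    push_cast
    rw [← h, two_mul m, inner_htf_even m M hm]
    field_simp
  · have h := sin_mul_sum_cos_even (((k : ℕ) - (l : ℕ) : ℝ) * Real.pi / M) m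
    have : (2 * m + 1 : ℝ) ≠ 0 := by positivity
    push_cast
    rw [← h, two_mul m, inner_htf_odd]
    field_simp

theorem inner_htf_of_ne (N : ℕ) (hN : 1 ≤ N) {k l : Fin (N + 1)} (hkl : k ≠ l) :
    inner ℝ (htf N (N + 1) k) (htf N (N + 1) l) =
      -((-1 : ℝ) ^ (k : ℕ) * (-1 : ℝ) ^ (l : ℕ)) / N := by
  have hN0 : (N : ℝ) ≠ 0 := by positivity
  have hM0 : ((N + 1 : ℕ) : ℝ) ≠ 0 := by positivity
  have h := sin_mul_inner_htf N (N + 1) hN k l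
  set θ := ((k : ℕ) - (l : ℕ) : ℝ) * Real.pi / ((N + 1 : ℕ) : ℝ) with hθ
  have hsin : Real.sin θ ≠ 0 := by
    rw [Ne, Real.sin_eq_zero_iff]
    rintro ⟨n, hn⟩
    have h1 : (n : ℝ) * ((N + 1 : ℕ) : ℝ) = (k : ℕ) - (l : ℕ) := by
      rw [hθ, eq_div_iff hM0] at hn
      exact mul_right_cancel₀ Real.pi_ne_zero (by linarith)
    have h2 : n * ((N + 1 : ℕ) : ℤ) = (k : ℕ) - (l : ℕ) := by exact_mod_cast h1
    have h3 : ((k : ℕ) - (l : ℕ) : ℤ) = 0 := by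
      refine Int.eq_zero_of_abs_lt_dvd (m := ((N + 1 : ℕ) : ℤ)) ⟨n, by rw [← h2, mul_comm]⟩ ?_
      have := k.isLt
      have := l.isLt
      rw [abs_lt]
      omega
    exact hkl (Fin.ext (by omega))
  have hNθ : (N : ℝ) * θ = (k : ℕ) * Real.pi - (l : ℕ) * Real.pi - θ := by
    rw [hθ]
    field_simp
    push_cast
    ring
  rw [hNθ, Real.sin_sub, Real.sin_sub, Real.cos_sub, Real.sin_nat_mul_pi, Real.sin_nat_mul_pi,
    Real.cos_nat_mul_pi, Real.cos_nat_mul_pi] at h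
  rw [eq_div_iff hN0]
  apply mul_left_cancel₀ hsin
  linarith

open Matrix in
theorem gram_modulatedHTF (N : ℕ) (hN : 1 ≤ N) {γ : ℝ} (hγ : γ = 1 ∨ γ = -1) :
    analysisMatrix (modulatedHTF N (N + 1) γ) * (analysisMatrix (modulatedHTF N (N + 1) γ))ᵀ =
      simplexGram (N + 1) N := by
  have hγ2 : γ * γ = 1 := by rcases hγ with rfl | rfl <;> norm_num
  have hsgn : ∀ n : ℕ, (-1 : ℝ) ^ n * (-1 : ℝ) ^ n = 1 := fun n => by
    rw [← mul_pow]; norm_num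
  ext k l
  rw [analysisMatrix_mul_transpose_apply, modulatedHTF, modulatedHTF, real_inner_smul_left,
    real_inner_smul_right]
  simp only [simplexGram, Matrix.of_apply]
  split_ifs with hkl
  · subst hkl
    rw [inner_htf_self N _ hN]
    linear_combination hγ2 * ((-1 : ℝ) ^ ((k : ℕ) + 1)) ^ 2 + hsgn ((k : ℕ) + 1)
  · rw [inner_htf_of_ne N hN hkl, pow_succ, pow_succ]
    linear_combination (-(1 / (N : ℝ))) * ((-1 : ℝ) ^ (k : ℕ)) ^ 2 * ((-1 : ℝ) ^ (l : ℕ)) ^ 2 * hγ2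
      + (-(1 / (N : ℝ))) * ((-1 : ℝ) ^ (l : ℕ)) ^ 2 * hsgn k + (-(1 / (N : ℝ))) * hsgn l

theorem inner_toEuclideanLin_of_mem_orthogonalGroup {N : ℕ} {U : Matrix (Fin N) (Fin N) ℝ}
    (hU : U ∈ Matrix.orthogonalGroup (Fin N) ℝ) (x y : EuclideanSpace ℝ (Fin N)) :
    inner ℝ (Matrix.toEuclideanLin U x) (Matrix.toEuclideanLin U y) = inner ℝ x y := by
  rw [← LinearMap.adjoint_inner_right, ← Matrix.toEuclideanLin_conjTranspose_eq_adjoint,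
    ← LinearMap.comp_apply, ← Matrix.toLpLin_mul_same,
    Matrix.conjTranspose_eq_transpose_of_trivial, (Matrix.mem_orthogonalGroup_iff' _ _).mp hU]
  simp

theorem IsEquivModulatedHTF.isRestrictedETF {N : ℕ} (hN : 1 ≤ N)
    {Ψ : Fin (N + 1) → EuclideanSpace ℝ (Fin N)} (h : IsEquivModulatedHTF Ψ) :
    IsRestrictedETF Ψ := by
  obtain ⟨U, hU, σ, γ, hγ, hΨ⟩ := h
  apply isRestrictedETF_of_gram hN
  ext k l
  rw [analysisMatrix_mul_transpose_apply, hΨ, hΨ, inner_toEuclideanLin_of_mem_orthogonalGroup hU,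
    ← analysisMatrix_mul_transpose_apply, gram_modulatedHTF N hN hγ]
  simp [simplexGram]

theorem IsRestrictedETF.isEquivModulatedHTF {N : ℕ} (hN : 2 ≤ N)
    {Ψ : Fin (N + 1) → EuclideanSpace ℝ (Fin N)} (h : IsRestrictedETF Ψ) :
    IsEquivModulatedHTF Ψ := by
  have hG := gram_modulatedHTF N (by omega) (γ := 1) (Or.inl rfl)
  obtain ⟨U, hU, hΨ⟩ := exists_orthogonal_of_gram_eq (by omega) (by omega)
    (isRestrictedETF_of_gram (by omega) hG).1 h.1 (hG.trans (gram_of_isRestrictedETF hN h).symm)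
  exact ⟨U, hU, 1, 1, Or.inl rfl, hΨ⟩

theorem stmt1 (N M : ℕ) (hN : 1 ≤ N) (hM : M = N + 1)
    (Ψ : Fin M → EuclideanSpace ℝ (Fin N)) :
    (IsEquivModulatedHTF Ψ → IsRestrictedETF Ψ) ∧
      (2 ≤ N → (IsRestrictedETF Ψ ↔ IsEquivModulatedHTF Ψ)) := by
  subst hM
  exact ⟨fun h => h.isRestrictedETF hN,
    fun h2 => ⟨fun h => h.isEquivModulatedHTF h2, fun h => h.isRestrictedETF hN⟩⟩
end

section
/- A composition $m=(m_1,\dots,m_K)$ of $M$ is a tuple of positive integers with sum $M$; put $M_i=m_1+\dots+m_i$ and $I_i=\{M_{i-1}+1,\dots,M_i\}$. Let $D(m)$ be the matrix whose rows are $e_k^T-e_\ell^T$ for all pairs $k\in I_i$, $\ell\in I_{i+1}$, $1\le i\le K-1$, and let $\tilde D(m)$ be $D(m)$ stacked above the rows $e_k^T$, $k\in I_{K-1}$ (no rows if $K=1$). A Variant II initial codeword compatible with $m$ is a vector $\hat y_{\mathrm{init}}=(\mu_1,\dots,\mu_1,\dots,\mu_K,\dots,\mu_K)\in\mathbb R^M$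 with $\mu_i$ appearing $m_i$ times and $\mu_1>\mu_2>\dots>\mu_K\ge 0$. Let $\mathcal Q(m)$ be the set of $M\times M$ diagonal matrices with diagonal entries $\pm1$ whose last $m_K$ diagonal entries equal $+1$. Let $M\ge 3$, let $F\in\mathbb R^{M\times N}$ be a frame analysis operator (that is, $\operatorname{rank}F=N$), let $R\in\mathbb R^{N\times M}$, and put $A=FR$. Suppose that $$\tilde D(m)\,V P A P^{-1} V\,\hat y_{\mathrm{init}}\ \ge\ 0\quad\text{(elementwise)}$$ for every composition $m$ of $M$, every Variant II initial codeword $\hat y_{\mathrm{init}}$ compatible with $m$, every $M\times M$ permutation matrix $P$, and every $V\in\mathcal Q(m)$. (That is, the linear reconstruction $\hat x=R\hat y$ satisfies the consistency inequalities of Variant II frame permutation quantization for every composition, compatible initial codeword and encoding $(P,V)$.) Then $A=aI_M$ for some $a\ge 0$, and, provided $R\ne 0$, $M=N$. -/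
/-- The differencing matrix `D(m)`: one row `e_k - e_ℓ` for every pair `(k, ℓ)` with `k ∈ I_i`
and `ℓ ∈ I_{i+1}` for some `i`. Here `c.index k` is the (zero-based) number of the block of the
composition `c` that contains the position `k`. -/
def diffMatrix {M : ℕ} (c : Composition M) :
    Matrix {p : Fin M × Fin M // (c.index p.1 : ℕ) + 1 = (c.index p.2 : ℕ)} (Fin M) ℝ :=
  Matrix.of fun p => Pi.single p.1.1 1 - Pi.single p.1.2 1

/-- The augmented matrix `D̃(m)`: `D(m)` stacked above the rows `e_k` for `k ∈ I_{K-1}`, the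
second-to-last block. For `K = 1` there is no such block and `D̃(m)` has no rows. -/
def augDiffMatrix {M : ℕ} (c : Composition M) :
    Matrix ({p : Fin M × Fin M // (c.index p.1 : ℕ) + 1 = (c.index p.2 : ℕ)} ⊕
      {k : Fin M // (c.index k : ℕ) + 2 = c.length}) (Fin M) ℝ :=
  Matrix.fromRows (diffMatrix c) (Matrix.of fun k => Pi.single k.1 1)

/-- `y` is a Variant II initial codeword compatible with the composition `c`: it is
`(μ_1, …, μ_1, …, μ_K, …, μ_K)` with `μ_i` repeated `m_i` times and `μ_1 > ⋯ > μ_K ≥ 0`. -/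
def IsVariantIICodeword {M : ℕ} (c : Composition M) (y : Fin M → ℝ) : Prop :=
  ∃ μ : Fin c.length → ℝ, StrictAnti μ ∧ (∀ i, 0 ≤ μ i) ∧ ∀ k, y k = μ (c.index k)

/-- The set `𝒬(m)` of sign-changing matrices: diagonal matrices with diagonal entries `±1`, equal
to `+1` at the positions of the last block of the composition. -/
def signMatrices {M : ℕ} (c : Composition M) : Set (Matrix (Fin M) (Fin M) ℝ) :=
  {V | ∃ ε : Fin M → ℝ, (∀ k, ε k = 1 ∨ ε k = -1) ∧
    (∀ k, (c.index k : ℕ) + 1 = c.length → ε k = 1) ∧ V = Matrix.diagonal ε}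

/-- The composition `(1, 1, n + 1)` of `n + 3`. -/
def oneOneComposition (n : ℕ) : Composition (n + 3) where
  blocks := [1, 1, n + 1]
  blocks_pos := by simp
  blocks_sum := by simp; omega

theorem oneOneComposition_length (n : ℕ) : (oneOneComposition n).length = 3 := rfl

theorem oneOneComposition_index (n : ℕ) (k : Fin (n + 3)) :
    ((oneOneComposition n).index k : ℕ) = min (k : ℕ) 2 := by
  have h1 := (oneOneComposition n).sizeUpTo_index_le k
  have h2 := (oneOneComposition n).lt_sizeUpTo_index_succ k
  rw [Fin.val_succ] at h2
  have h3 : ((oneOneComposition n).index k : ℕ) < 3 := ((oneOneComposition n).index k).isLt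
  generalize ((oneOneComposition n).index k : ℕ) = i, (k : ℕ) = l at h1 h2 h3 ⊢
  interval_cases i <;>
    simp [Composition.sizeUpTo, oneOneComposition] at h1 h2 <;> omega

open Matrix in
theorem permMatrix_mul_mul_inv {n : Type*} [Fintype n] [DecidableEq n] (σ : Equiv.Perm n)
    (A : Matrix n n ℝ) : σ.permMatrix ℝ * A * (σ.permMatrix ℝ)⁻¹ = A.submatrix σ σ := by
  have hinv : (σ.permMatrix ℝ)⁻¹ = (σ⁻¹).permMatrix ℝ := by
    apply Matrix.inv_eq_right_inv
    rw [← Matrix.permMatrix_mul]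
    simp
  rw [hinv]
  ext i j
  simp [Equiv.Perm.permMatrix, PEquiv.toMatrix_toPEquiv_mul, PEquiv.mul_toMatrix_toPEquiv]
  rfl

theorem exists_perm_zero_one {n : ℕ} {i j : Fin (n + 3)} (hij : i ≠ j) :
    ∃ σ : Equiv.Perm (Fin (n + 3)), σ 0 = i ∧ σ 1 = j := by
  refine ⟨Equiv.swap (Equiv.swap 0 i 1) j * Equiv.swap 0 i, ?_, ?_⟩
  · rw [Equiv.Perm.mul_apply, Equiv.swap_apply_left]
    refine Equiv.swap_apply_of_ne_of_ne (fun h => ?_) hij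
    have h' : Equiv.swap 0 i 0 = Equiv.swap 0 i 1 := by rw [Equiv.swap_apply_left]; exact h
    exact zero_ne_one ((Equiv.swap 0 i).injective h')
  · rw [Equiv.Perm.mul_apply, Equiv.swap_apply_left]

/-- The consistency inequalities for the composition `(1, 1, n + 1)`, a codeword `(s, t, 0, …, 0)`
and sign changes in the second position only. -/
theorem consistency_oneOne {n : ℕ} (A : Matrix (Fin (n + 3)) (Fin (n + 3)) ℝ)
    (h : ∀ (c : Composition (n + 3)) (y : Fin (n + 3) → ℝ), IsVariantIICodeword c y →
      ∀ (σ : Equiv.Perm (Fin (n + 3))) (P : Matrix (Fin (n + 3)) (Fin (n + 3)) ℝ),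
        P = σ.permMatrix ℝ → ∀ V ∈ signMatrices c,
          0 ≤ (augDiffMatrix c * V * P * A * P⁻¹ * V).mulVec y)
    {i j : Fin (n + 3)} (hij : i ≠ j) {s t e : ℝ} (hst : t < s) (ht : 0 < t)
    (he : e = 1 ∨ e = -1) :
    0 ≤ e * (A j i * s + A j j * (e * t)) ∧
      e * (A j i * s + A j j * (e * t)) ≤ A i i * s + A i j * (e * t) := by
  obtain ⟨σ, rfl, rfl⟩ := exists_perm_zero_one hij
  let c := oneOneComposition n
  let μ : Fin c.length → ℝ := ![s, t, 0]
  let y : Fin (n + 3) → ℝ := fun k => μ (c.index k)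
  let ε : Fin (n + 3) → ℝ := fun k => if k = 1 then e else 1
  have i0 : c.index 0 = (0 : Fin 3) := Fin.ext (by rw [oneOneComposition_index]; rfl)
  have i1 : c.index 1 = (1 : Fin 3) := Fin.ext (by rw [oneOneComposition_index]; simp)
  have i2 (k : Fin (n + 1)) : c.index k.succ.succ = (2 : Fin 3) :=
    Fin.ext (by rw [oneOneComposition_index]; simp)
  have hy : IsVariantIICodeword c y := by
    refine ⟨μ, ?_, ?_, fun _ => rfl⟩
    · change StrictAnti (![s, t, 0] : Fin 3 → ℝ)
      rw [Fin.strictAnti_iff_succ_lt]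
      intro k
      fin_cases k <;> simp [hst, ht]
    · change ∀ k : Fin 3, 0 ≤ (![s, t, 0] : Fin 3 → ℝ) k
      intro k
      fin_cases k <;> simp [ht.le, (ht.trans hst).le]
  have hV : Matrix.diagonal ε ∈ signMatrices c := by
    refine ⟨ε, fun k => ?_, fun k hk => ?_, rfl⟩
    · by_cases hk : k = 1 <;> simp [ε, hk, he]
    · rw [oneOneComposition_index, oneOneComposition_length] at hk
      have : k ≠ 1 := by rintro rfl; simp at hk
      simp [ε, this]
  have key := h c y hy σ _ rfl _ hV
  have hmat : augDiffMatrix c * Matrix.diagonal ε * σ.permMatrix ℝ * A * (σ.permMatrix ℝ)⁻¹ *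
      Matrix.diagonal ε =
      augDiffMatrix c * (Matrix.diagonal ε * A.submatrix σ σ * Matrix.diagonal ε) := by
    rw [← permMatrix_mul_mul_inv]
    simp only [Matrix.mul_assoc]
  rw [hmat, ← Matrix.mulVec_mulVec] at key
  have hw (k : Fin (n + 3)) :
      (Matrix.diagonal ε * A.submatrix σ σ * Matrix.diagonal ε).mulVec y k =
        ε k * (A (σ k) (σ 0) * s + A (σ k) (σ 1) * (e * t)) := by
    have y0 : y 0 = s := by simp only [y, i0]; rfl
    have y1 : y 1 = t := by simp only [y, i1]; rfl
    have y2 (k : Fin (n + 1)) : y k.succ.succ = 0 := by simp only [y, i2]; rfl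
    have h01 : (0 : Fin (n + 3)) ≠ 1 := zero_ne_one
    simp only [Matrix.mulVec, dotProduct, Matrix.mul_diagonal, Matrix.diagonal_mul,
      Matrix.submatrix_apply]
    rw [Fin.sum_univ_succ, Fin.sum_univ_succ]
    simp only [y2, Fin.succ_zero_eq_one, y0, y1, mul_zero, Finset.sum_const_zero, ε, h01, if_true,
      if_false]
    ring
  have e0 : ε 0 = 1 := by simp [ε]
  have e1 : ε 1 = e := by simp [ε]
  generalize hwd : (Matrix.diagonal ε * A.submatrix σ σ * Matrix.diagonal ε).mulVec y = w at *
  constructor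
  · have := key (Sum.inr ⟨1, by rw [oneOneComposition_index, oneOneComposition_length]; simp⟩)
    simpa [augDiffMatrix, Matrix.mulVec, hw, e1] using this
  · have := key (Sum.inl ⟨(0, 1), by simp [oneOneComposition_index, c]⟩)
    change 0 ≤ (Pi.single 0 1 - Pi.single 1 1 : Fin (n + 3) → ℝ) ⬝ᵥ w at this
    simpa [hw, e1, e0, sub_dotProduct] using this

theorem nonneg_of_forall_add_mul_nonneg {a b : ℝ} (h : ∀ t, 0 < t → t < 1 → 0 ≤ a + b * t) :
    0 ≤ a := by
  have hlim : Filter.Tendsto (fun t : ℝ => a + b * t) (nhdsWithin 0 (Set.Ioi 0)) (nhds a) := by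
    have hc : Continuous fun t : ℝ => a + b * t := by fun_prop
    simpa using (hc.tendsto 0).mono_left nhdsWithin_le_nhds
  refine ge_of_tendsto hlim ?_
  filter_upwards [Ioo_mem_nhdsGT (zero_lt_one (α := ℝ))] with t ht
  exact h t ht.1 ht.2

open Matrix in
theorem stmt6 {M N : ℕ} (hM : 3 ≤ M)
    (F : Matrix (Fin M) (Fin N) ℝ) (hF : F.rank = N)
    (R : Matrix (Fin N) (Fin M) ℝ)
    (A : Matrix (Fin M) (Fin M) ℝ) (hA : A = F * R)
    (h : ∀ (c : Composition M) (y : Fin M → ℝ), IsVariantIICodeword c y →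
      ∀ (σ : Equiv.Perm (Fin M)) (P : Matrix (Fin M) (Fin M) ℝ), P = σ.permMatrix ℝ →
      ∀ V ∈ signMatrices c,
        0 ≤ (augDiffMatrix c * V * P * A * P⁻¹ * V) *ᵥ y) :
    (∃ a : ℝ, 0 ≤ a ∧ A = a • (1 : Matrix (Fin M) (Fin M) ℝ)) ∧ (R ≠ 0 → M = N) := by
  obtain ⟨n, rfl⟩ : ∃ n, M = n + 3 := ⟨M - 3, by omega⟩
  have hoff (i j : Fin (n + 3)) (hij : i ≠ j) : A j i = 0 := by
    have hpos : 0 ≤ A j i := nonneg_of_forall_add_mul_nonneg (b := A j j) fun t h0 h1 => by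
      have := (consistency_oneOne A h hij h1 h0 (Or.inl rfl)).1
      linarith
    have hneg : 0 ≤ -A j i := nonneg_of_forall_add_mul_nonneg (b := A j j) fun t h0 h1 => by
      have := (consistency_oneOne A h hij h1 h0 (Or.inr rfl)).1
      linarith
    linarith
  have hdiag_le (i j : Fin (n + 3)) (hij : i ≠ j) : A j j ≤ A i i := by
    have : 0 ≤ A i i - A j j := nonneg_of_forall_add_mul_nonneg (b := A j j) fun t h0 h1 => by
      have := (consistency_oneOne A h hij (s := 1) (t := 1 - t) (by linarith) (by linarith)
        (Or.inl rfl)).2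
      rw [hoff i j hij, hoff j i hij.symm] at this
      linarith
    linarith
  have hnonneg : 0 ≤ A 0 0 := by
    have h10 : (1 : Fin (n + 3)) ≠ 0 := one_ne_zero
    have := (consistency_oneOne A h h10 (s := 2) (t := 1) (by norm_num) one_pos (Or.inl rfl)).1
    rw [hoff 1 0 h10] at this
    linarith
  have hscalar : A = A 0 0 • (1 : Matrix (Fin (n + 3)) (Fin (n + 3)) ℝ) := by
    ext i j
    by_cases hij : i = j
    · subst hij
      by_cases hi : i = 0
      · simp [hi]
      · simpa using le_antisymm (hdiag_le 0 i (Ne.symm hi)) (hdiag_le i 0 hi)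
    · simp [hij, hoff j i (Ne.symm hij)]
  refine ⟨⟨A 0 0, hnonneg, hscalar⟩, fun hR => ?_⟩
  have hle : N ≤ n + 3 := by
    have := F.rank_le_height
    omega
  have ha : A 0 0 ≠ 0 := by
    intro h0
    rw [h0, zero_smul, hA] at hscalar
    have hinj : Function.Injective F.mulVec := by
      rw [Matrix.mulVec_injective_iff, linearIndependent_iff_card_eq_finrank_span,
        Set.finrank, ← Matrix.rank_eq_finrank_span_cols, hF, Fintype.card_fin]
    refine hR (Matrix.ext_of_mulVec_single fun j => hinj ?_)
    rw [Matrix.mulVec_mulVec, hscalar, Matrix.zero_mulVec, Matrix.zero_mulVec,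
      Matrix.mulVec_zero]
  have hrank : A.rank = n + 3 := by
    have hu : IsUnit A := by
      rw [hscalar, ← Algebra.algebraMap_eq_smul_one]
      exact ha.isUnit.map (algebraMap ℝ (Matrix (Fin (n + 3)) (Fin (n + 3)) ℝ))
    simpa using Matrix.rank_of_isUnit A hu
  have := Matrix.rank_mul_le_left F R
  rw [← hA, hrank, hF] at this
  omega
end

section
/- Let $N\ge 2$, $M>N$ (so $M\ge 3$), and let $F\in\mathbb{R}^{M\times N}$ be the analysis operator of a unit-norm tight frame, i.e. every row of $F$ has Euclidean norm $1$ and $F^*F=\frac{M}{N}I_N$. Put $F^\dagger=(F^*F)^{-1}F^*$. For a composition $m=(m_1,\dots,m_K)$ of $M$ (positive integers with sum $M$), let $I_1,\dots,I_K$ be the consecutive blocks of $\{1,\dots,M\}$ of sizes $m_1,\dots,m_K$, and let $D(m)$ be the matrix whose rows are $e_k^T-e_\ell^T$ for all $k\in I_i$, $\ell\in I_{i+1}$, $1\le i\le K-1$. A Variant I initial codeword compatible with $m$ is a vector $\hat y_{\mathrm{init}}=(\mu_1,\dots,\mu_1,\dots,\mu_K,\dots,\mu_K)\in\mathbb{R}^M$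 in which $\mu_i$ appears $m_i$ times and $\mu_1>\dots>\mu_K$ are real. A permutation matrix $P$ is a Variant I frame permutation quantization (FPQ) encoding of $x\in\mathbb{R}^N$ if $D(m)PFx\ge 0$ elementwise. Canonical reconstruction is consistent for $(m,\hat y_{\mathrm{init}})$ if, for every $x\in\mathbb{R}^N$ and every such encoding $P$ of $x$, the vector $\hat x=F^\dagger P^{-1}\hat y_{\mathrm{init}}$ satisfies $D(m)PF\hat x\ge 0$ elementwise. Canonical reconstruction is consistent for every composition $m$ of $M$ and every Variant I initial codeword compatible with $m$ if and only if $M=N+1$ and $FF^*$ is the $M\times M$ matrix with $1$ on the diagonal and $-\frac1N$ in every off-diagonal entry. -/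
open scoped Matrix

noncomputable section

namespace FPQ

/-- `F` is the analysis operator of a unit-norm tight frame: its rows have unit Euclidean norm and
`F* F = (M/N) I_N`. -/
structure IsUNTF {M N : ℕ} (F : Matrix (Fin M) (Fin N) ℝ) : Prop where
  unit_norm : ∀ k : Fin M, ‖WithLp.toLp 2 (F k)‖ = 1
  tight : Fᵀ * F = ((M : ℝ) / (N : ℝ)) • (1 : Matrix (Fin N) (Fin N) ℝ)

/-- The row indices of the differencing matrix `D(m)`: pairs `(k, ℓ)` with `k ∈ I_i` and
`ℓ ∈ I_{i+1}` for some `i`. Here `m.index k` is the (zero-based) number of the block of `m`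
that contains the position `k`. -/
abbrev DiffRow {M : ℕ} (m : Composition M) : Type :=
  {p : Fin M × Fin M // (m.index p.1 : ℕ) + 1 = (m.index p.2 : ℕ)}

/-- The differencing matrix `D(m)`, whose row at `(k, ℓ)` is `e_kᵀ - e_ℓᵀ`. -/
def diffMatrix {M : ℕ} (m : Composition M) : Matrix (DiffRow m) (Fin M) ℝ :=
  Matrix.of fun p => Pi.single p.1.1 1 - Pi.single p.1.2 1

/-- `y = (μ_1, …, μ_1, …, μ_K, …, μ_K)` with `μ_i` appearing `m_i` times and
`μ_1 > ⋯ > μ_K`: a Variant I initial codeword compatible with `m`. -/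
def IsVariantICodeword {M : ℕ} (m : Composition M) (y : Fin M → ℝ) : Prop :=
  ∃ μ : Fin m.length → ℝ, StrictAnti μ ∧ ∀ k, y k = μ (m.index k)

/-- The pseudo-inverse `F† = (F* F)⁻¹ F*`. -/
def pinv {M N : ℕ} (F : Matrix (Fin M) (Fin N) ℝ) : Matrix (Fin N) (Fin M) ℝ :=
  (Fᵀ * F)⁻¹ * Fᵀ

/-- The vector `x` lies in the Variant I FPQ cell of the permutation matrix `P` of `σ`:
`D(m) P F x ≥ 0` elementwise, i.e. `P F x` is `m`-descending. -/
def InCell {M N : ℕ} (F : Matrix (Fin M) (Fin N) ℝ) (m : Composition M)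
    (σ : Equiv.Perm (Fin M)) (x : Fin N → ℝ) : Prop :=
  ∀ r : DiffRow m, 0 ≤ (diffMatrix m *ᵥ (σ.permMatrix ℝ *ᵥ (F *ᵥ x))) r

/-- The canonical decoding `x̂ = F† P⁻¹ ŷ_init`, with `P` the permutation matrix of `σ`. -/
def canonicalDecoding {M N : ℕ} (F : Matrix (Fin M) (Fin N) ℝ)
    (σ : Equiv.Perm (Fin M)) (y : Fin M → ℝ) : Fin N → ℝ :=
  pinv F *ᵥ ((σ.permMatrix ℝ)⁻¹ *ᵥ y)

/-- Canonical reconstruction is consistent with Variant I FPQ encoding that uses the frame `F`,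
the composition `m` and the initial codeword `y`: whenever `P` encodes a vector `x`, the
reconstruction from `P` lies in the cell of `P`. -/
def CanonicalConsistent {M N : ℕ} (F : Matrix (Fin M) (Fin N) ℝ) (m : Composition M)
    (y : Fin M → ℝ) : Prop :=
  ∀ (x : Fin N → ℝ) (σ : Equiv.Perm (Fin M)),
    InCell F m σ x → InCell F m σ (canonicalDecoding F σ y)

end FPQ

end

open scoped Matrix

namespace FPQ

theorem inCell_iff {M N : ℕ} (F : Matrix (Fin M) (Fin N) ℝ) (m : Composition M)
    (σ : Equiv.Perm (Fin M)) (x : Fin N → ℝ) :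
    InCell F m σ x ↔ ∀ k ℓ : Fin M, (m.index k : ℕ) + 1 = (m.index ℓ : ℕ) →
      (F *ᵥ x) (σ ℓ) ≤ (F *ᵥ x) (σ k) := by
  have hrow (r : DiffRow m) : (diffMatrix m *ᵥ (σ.permMatrix ℝ *ᵥ (F *ᵥ x))) r =
      (F *ᵥ x) (σ r.1.1) - (F *ᵥ x) (σ r.1.2) := by
    rw [Matrix.permMatrix_mulVec]
    change (Pi.single r.1.1 1 - Pi.single r.1.2 1) ⬝ᵥ ((F *ᵥ x) ∘ σ) = _
    rw [sub_dotProduct, single_one_dotProduct, single_one_dotProduct]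
    rfl
  simp only [InCell, hrow, sub_nonneg, Subtype.forall, Prod.forall]

theorem inCell_zero {M N : ℕ} (F : Matrix (Fin M) (Fin N) ℝ) (m : Composition M)
    (σ : Equiv.Perm (Fin M)) : InCell F m σ 0 := by
  simp [inCell_iff]

theorem inv_permMatrix_mulVec {M : ℕ} (σ : Equiv.Perm (Fin M)) (y : Fin M → ℝ) :
    (σ.permMatrix ℝ)⁻¹ *ᵥ y = y ∘ σ.symm := by
  have h : (σ.permMatrix ℝ)⁻¹ = (σ⁻¹).permMatrix ℝ := by
    apply Matrix.inv_eq_left_inv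
    rw [← Matrix.permMatrix_mul]
    simp
  rw [h, Matrix.permMatrix_mulVec]
  rfl

theorem IsUNTF.pinv_eq {M N : ℕ} {F : Matrix (Fin M) (Fin N) ℝ} (hF : IsUNTF F)
    (hM : 0 < M) (hN : 0 < N) : pinv F = ((N : ℝ) / M) • Fᵀ := by
  have hM' : (M : ℝ) ≠ 0 := by positivity
  have hN' : (N : ℝ) ≠ 0 := by positivity
  have h : (Fᵀ * F)⁻¹ = ((N : ℝ) / M) • (1 : Matrix (Fin N) (Fin N) ℝ) := by
    apply Matrix.inv_eq_left_inv
    rw [hF.tight, Matrix.smul_mul, one_mul, smul_smul]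
    rw [show (N : ℝ) / M * (M / N) = 1 by field_simp, one_smul]
  rw [pinv, h, Matrix.smul_mul, Matrix.one_mul]

theorem IsUNTF.mulVec_canonicalDecoding {M N : ℕ} {F : Matrix (Fin M) (Fin N) ℝ}
    (hF : IsUNTF F) (hM : 0 < M) (hN : 0 < N) (σ : Equiv.Perm (Fin M)) (y : Fin M → ℝ) :
    F *ᵥ canonicalDecoding F σ y = ((N : ℝ) / M) • ((F * Fᵀ) *ᵥ (y ∘ σ.symm)) := by
  rw [canonicalDecoding, inv_permMatrix_mulVec, hF.pinv_eq hM hN, Matrix.mulVec_mulVec,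
    Matrix.mul_smul, Matrix.smul_mulVec]

/-- In terms of the Gram matrix, membership of the reconstruction in its cell does not involve
the encoded vector. -/
theorem IsUNTF.inCell_canonicalDecoding_iff {M N : ℕ} {F : Matrix (Fin M) (Fin N) ℝ}
    (hF : IsUNTF F) (hM : 0 < M) (hN : 0 < N) (m : Composition M) (σ : Equiv.Perm (Fin M))
    (y : Fin M → ℝ) :
    InCell F m σ (canonicalDecoding F σ y) ↔
      ∀ k ℓ : Fin M, (m.index k : ℕ) + 1 = (m.index ℓ : ℕ) →
        ((F * Fᵀ) *ᵥ (y ∘ σ.symm)) (σ ℓ) ≤ ((F * Fᵀ) *ᵥ (y ∘ σ.symm)) (σ k) := by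
  have hc : (0 : ℝ) < (N : ℝ) / M := by positivity
  simp only [inCell_iff, hF.mulVec_canonicalDecoding hM hN, Pi.smul_apply, smul_eq_mul,
    mul_le_mul_iff_right₀ hc]

theorem IsUNTF.gram_diag {M N : ℕ} {F : Matrix (Fin M) (Fin N) ℝ} (hF : IsUNTF F)
    (k : Fin M) : (F * Fᵀ) k k = 1 := by
  have h := hF.unit_norm k
  have h2 : ‖WithLp.toLp 2 (F k)‖ ^ 2 = 1 := by rw [h]; norm_num
  rw [EuclideanSpace.real_norm_sq_eq] at h2
  rw [Matrix.mul_apply, ← h2]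
  exact Finset.sum_congr rfl fun i _ => by simp [pow_two]

theorem IsUNTF.gram_mul_gram {M N : ℕ} {F : Matrix (Fin M) (Fin N) ℝ} (hF : IsUNTF F) :
    (F * Fᵀ) * (F * Fᵀ) = ((M : ℝ) / N) • (F * Fᵀ) := by
  rw [Matrix.mul_assoc, ← Matrix.mul_assoc Fᵀ, hF.tight, Matrix.smul_mul, Matrix.one_mul,
    Matrix.mul_smul]

theorem index_ones {M : ℕ} (k : Fin M) : ((Composition.ones M).index k : ℕ) = k := by
  have h1 := (Composition.ones M).sizeUpTo_index_le k
  have h2 := (Composition.ones M).lt_sizeUpTo_index_succ k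
  rw [Composition.ones_sizeUpTo] at h1 h2
  have h3 := ((Composition.ones M).index k).2.trans_eq (Composition.ones_length M)
  simp only [Fin.val_succ] at h2
  omega

theorem isVariantICodeword_ones {M : ℕ} {y : Fin M → ℝ} (hy : StrictAnti y) :
    IsVariantICodeword (Composition.ones M) y := by
  refine ⟨fun i => y (Fin.cast (Composition.ones_length M) i), fun i j hij => hy hij, fun k => ?_⟩
  congr 1
  exact Fin.ext (index_ones k).symm

theorem nonneg_of_forall_pos_add_mul {a b : ℝ} (h : ∀ ε : ℝ, 0 < ε → 0 ≤ a + ε * b) :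
    0 ≤ a := by
  have ht : Filter.Tendsto (fun ε : ℝ => a + ε * b) (nhdsWithin 0 (Set.Ioi 0)) (nhds a) := by
    have : Continuous fun ε : ℝ => a + ε * b := by fun_prop
    simpa using (this.tendsto 0).mono_left nhdsWithin_le_nhds
  refine ge_of_tendsto ht ?_
  filter_upwards [self_mem_nhdsWithin] with ε hε using h ε hε

/-- Consistency for the finest composition, with codewords close to `(1, 0, …, 0)`, orders the
off-diagonal entries of a column of the Gram matrix in every way. -/
theorem gram_apply_le_of_consistent {M N : ℕ} (hM : 3 ≤ M) (hN : 0 < N)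
    {F : Matrix (Fin M) (Fin N) ℝ} (hF : IsUNTF F)
    (h : ∀ y, StrictAnti y → CanonicalConsistent F (Composition.ones M) y)
    (σ : Equiv.Perm (Fin M)) :
    (F * Fᵀ) (σ ⟨2, by omega⟩) (σ ⟨0, by omega⟩) ≤
      (F * Fᵀ) (σ ⟨1, by omega⟩) (σ ⟨0, by omega⟩) := by
  set e : Fin M → ℝ := Pi.single ⟨0, by omega⟩ 1 with he
  set u : Fin M → ℝ := fun k => -(k : ℝ) with hu
  have hanti (ε : ℝ) (hε : 0 < ε) : StrictAnti (e + ε • u) := by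
    intro i j hij
    have hij' : (i : ℝ) < (j : ℝ) := by exact_mod_cast hij
    have hj : e j = 0 := Pi.single_eq_of_ne (fun hj => by simp [hj, Fin.lt_def] at hij) _
    have hi : 0 ≤ e i := by
      rw [he, Pi.single_apply]
      split_ifs <;> norm_num
    simp only [Pi.add_apply, Pi.smul_apply, smul_eq_mul, hu, hj]
    nlinarith
  have hcol (k : Fin M) : ((F * Fᵀ) *ᵥ (e ∘ σ.symm)) k = (F * Fᵀ) k (σ ⟨0, by omega⟩) := by
    have : e ∘ σ.symm = Pi.single (σ ⟨0, by omega⟩) 1 := by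
      ext i
      simp [he, Pi.single_apply, Equiv.symm_apply_eq]
    rw [this, Matrix.mulVec_single_one]
    rfl
  rw [← sub_nonneg]
  refine nonneg_of_forall_pos_add_mul
    (b := ((F * Fᵀ) *ᵥ (u ∘ σ.symm)) (σ ⟨1, by omega⟩) -
      ((F * Fᵀ) *ᵥ (u ∘ σ.symm)) (σ ⟨2, by omega⟩)) fun ε hε => ?_
  have hc := (hF.inCell_canonicalDecoding_iff (by omega) hN _ σ _).1
    (h _ (hanti ε hε) 0 σ (inCell_zero F _ σ)) ⟨1, by omega⟩ ⟨2, by omega⟩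
    (by simp only [index_ones])
  have hlin : (e + ε • u) ∘ σ.symm = e ∘ σ.symm + ε • (u ∘ σ.symm) := rfl
  rw [hlin, Matrix.mulVec_add, Matrix.mulVec_smul] at hc
  simp only [Pi.add_apply, Pi.smul_apply, smul_eq_mul, hcol] at hc
  linarith

theorem exists_perm_apply_eq {M : ℕ} (hM : 3 ≤ M) {i j k : Fin M} (hij : i ≠ j) (hik : i ≠ k)
    (hjk : j ≠ k) : ∃ σ : Equiv.Perm (Fin M),
      σ ⟨0, by omega⟩ = i ∧ σ ⟨1, by omega⟩ = j ∧ σ ⟨2, by omega⟩ = k := by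
  have hf : Function.Injective ![i, j, k] := by
    intro a b hab
    fin_cases a <;> fin_cases b <;> simp_all
  have := Equiv.Perm.isMultiplyPretransitive (Fin M) 3
  obtain ⟨σ, hσ⟩ := MulAction.exists_smul_eq (Equiv.Perm (Fin M))
    (Fin.castLEEmb hM : Fin 3 ↪ Fin M) ⟨![i, j, k], hf⟩
  exact ⟨σ, DFunLike.congr_fun hσ 0, DFunLike.congr_fun hσ 1, DFunLike.congr_fun hσ 2⟩

theorem gram_offDiag_const {M N : ℕ} (hM : 3 ≤ M) (hN : 0 < N)
    {F : Matrix (Fin M) (Fin N) ℝ} (hF : IsUNTF F)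
    (h : ∀ y, StrictAnti y → CanonicalConsistent F (Composition.ones M) y) :
    ∃ b : ℝ, ∀ i j, i ≠ j → (F * Fᵀ) i j = b := by
  have hle (i j k : Fin M) (hij : i ≠ j) (hik : i ≠ k) :
      (F * Fᵀ) k i ≤ (F * Fᵀ) j i := by
    by_cases hjk : j = k
    · rw [hjk]
    obtain ⟨σ, rfl, rfl, rfl⟩ := exists_perm_apply_eq hM hij hik hjk
    exact gram_apply_le_of_consistent hM hN hF h σ
  have hcol (i j k : Fin M) (hij : i ≠ j) (hik : i ≠ k) :
      (F * Fᵀ) j i = (F * Fᵀ) k i := le_antisymm (hle i k j hik hij) (hle i j k hij hik)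
  have hsymm (i j : Fin M) : (F * Fᵀ) i j = (F * Fᵀ) j i := by
    simp [Matrix.mul_apply, mul_comm]
  let z : Fin M := ⟨0, by omega⟩
  let o : Fin M := ⟨1, by omega⟩
  have hzo : z ≠ o := by simp [z, o]
  have hz (i : Fin M) (hi : z ≠ i) : (F * Fᵀ) i z = (F * Fᵀ) o z := hcol z i o hi hzo
  refine ⟨(F * Fᵀ) o z, fun i j hij => ?_⟩
  by_cases hj : j = z
  · rw [hj]
    exact hz i fun hi => hij (by rw [hj, hi])
  · rw [hcol j i z hij.symm hj, hsymm, hz j (Ne.symm hj)]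

theorem eq_add_one_of_gram_offDiag_const {M N : ℕ} (hN : 2 ≤ N) (hNM : N < M)
    {F : Matrix (Fin M) (Fin N) ℝ} (hF : IsUNTF F) {b : ℝ}
    (hb : ∀ i j, i ≠ j → (F * Fᵀ) i j = b) : M = N + 1 ∧ b = -(1 / (N : ℝ)) := by
  let J : Matrix (Fin M) (Fin M) ℝ := Matrix.of fun _ _ => 1
  have hJ : J * J = (M : ℝ) • J := by
    ext i j
    simp [J, Matrix.mul_apply]
  have hG : F * Fᵀ = (1 - b) • (1 : Matrix (Fin M) (Fin M) ℝ) + b • J := by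
    ext i j
    by_cases hij : i = j
    · subst hij
      simp [J, hF.gram_diag]
    · simp [J, hb i j hij, Matrix.one_apply_ne hij]
  have hsq := hF.gram_mul_gram
  rw [hG] at hsq
  simp only [add_mul, mul_add, Matrix.smul_mul, Matrix.mul_smul, one_mul, mul_one, hJ] at hsq
  let z : Fin M := ⟨0, by omega⟩
  let o : Fin M := ⟨1, by omega⟩
  have hzo : z ≠ o := by simp [z, o]
  have hd := congrFun (congrFun hsq z) z
  have ho := congrFun (congrFun hsq z) o
  simp [J, Matrix.one_apply_ne hzo] at hd ho
  have hN0 : (0 : ℝ) < N := by positivity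
  have hN2 : (2 : ℝ) ≤ N := by exact_mod_cast hN
  have hM1 : (N : ℝ) + 1 ≤ M := by exact_mod_cast hNM
  have hfac : (1 - b) * (1 - b - M / N) = 0 := by linear_combination hd - ho
  rcases mul_eq_zero.1 hfac with h1 | h1
  · have hb1 : b = 1 := by linarith
    rw [hb1] at ho
    field_simp at ho
    nlinarith
  · have hb1 : b = 1 - M / N := by linarith
    have hbne : b ≠ 0 := by
      rw [hb1]
      intro h0
      field_simp at h0
      linarith
    have hlin : 2 * (1 - b) + M * b = M / N := by
      apply mul_left_cancel₀ hbne
      linear_combination ho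
    rw [hb1] at hlin
    field_simp at hlin
    have hprod : ((M : ℝ) - 1 - N) * M = 0 := by linear_combination -hlin
    have hMN : (M : ℝ) = N + 1 := by
      rcases mul_eq_zero.1 hprod with h2 | h2 <;> linarith
    refine ⟨by exact_mod_cast hMN, ?_⟩
    rw [hb1, hMN]
    field_simp
    ring

end FPQ

theorem stmt10 {M N : ℕ} (hM : 3 ≤ M) (hN : 2 ≤ N) (hNM : N < M)
    (F : Matrix (Fin M) (Fin N) ℝ) (hF : FPQ.IsUNTF F) :
    (∀ (m : Composition M) (y : Fin M → ℝ),
        FPQ.IsVariantICodeword m y → FPQ.CanonicalConsistent F m y) ↔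
      (M = N + 1 ∧
        F * Fᵀ = Matrix.of fun k ℓ : Fin M => if k = ℓ then (1 : ℝ) else -(1 / (N : ℝ))) := by
  constructor
  · intro h
    obtain ⟨b, hb⟩ := FPQ.gram_offDiag_const hM (by omega) hF
      fun y hy => h _ y (FPQ.isVariantICodeword_ones hy)
    obtain ⟨hMN, hbN⟩ := FPQ.eq_add_one_of_gram_offDiag_const hN hNM hF hb
    refine ⟨hMN, ?_⟩
    ext i j
    by_cases hij : i = j
    · subst hij
      simp [hF.gram_diag]
    · rw [hb i j hij, hbN, Matrix.of_apply, if_neg hij]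
  · rintro ⟨-, hG⟩ m y ⟨μ, hμ, hy⟩ x σ -
    rw [hF.inCell_canonicalDecoding_iff (by omega) (by omega)]
    intro k ℓ hkl
    have hyle : y ℓ ≤ y k := by
      rw [hy, hy]
      exact hμ.antitone (Fin.le_def.2 (by omega))
    have hmul (w : Fin M → ℝ) (i : Fin M) :
        ((F * Fᵀ) *ᵥ w) i = (1 + 1 / (N : ℝ)) * w i - 1 / (N : ℝ) * ∑ j, w j := by
      have hterm (j : Fin M) : (F * Fᵀ) i j * w j =
          (if i = j then (1 + 1 / (N : ℝ)) * w j else 0) - 1 / (N : ℝ) * w j := by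
        rw [hG, Matrix.of_apply]
        split_ifs <;> ring
      simp only [Matrix.mulVec, dotProduct, hterm, Finset.sum_sub_distrib, Finset.mul_sum,
        Finset.sum_ite_eq, Finset.mem_univ, if_true]
    rw [hmul, hmul]
    simp only [Function.comp_apply, Equiv.symm_apply_apply]
    gcongr
end
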